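/- Let K ⊂ ℝ² be an equilateral triangle with center at the origin and K° its polar. Then every simple classical closed billiard trajectory in the hexagon K − K with geometry given by K° is 4-periodic and has length 9 measured in the norm ‖q‖_{K°} = max_{p∈K°}⟨p,q⟩. Moreover, arbitrarily close to any point of ∂((K−K) × K°) there passes such a shortest billiard trajectory. -/

import Mathlib

open scoped RealInnerProductSpace Pointwise

namespace Billiard2

/-- The Euclidean plane. -/
abbrev E2 := EuclideanSpace ℝ (Fin 2)

/-- The polar body `K° = {p : ⟨p, q⟩ ≤ 1 for all q ∈ K}`. -/
def polarBody (K : Set E2) : Set E2 := {p | ∀ q ∈ K, ⟪p, q⟫ ≤ 1}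

/-- `u` is the outer normal of the edge of `H` containing `q`, normalized to lie in `∂H°`:
`u ∈ H°`, `⟨u, q⟩ = 1`, and `u` is the unique such vector. Uniqueness encodes that `q` lies
in the relative interior of an edge of the polygon `H`. -/
def IsUniqueNormal (H : Set E2) (q u : E2) : Prop :=
  u ∈ polarBody H ∧ ⟪u, q⟫ = 1 ∧ ∀ v ∈ polarBody H, ⟪v, q⟫ = 1 → v = u

/-- A classical closed billiard trajectory in the configuration `H × T` (with `T = H°`):
closed `m`-periodic sequences of coordinates `q i ∈ ∂H` and momenta `p i ∈ ∂T`, each in the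
relative interior of an edge (encoded by uniqueness of the normalized outer normal),
satisfying the reflection rule `p (i+1) − p i = −λ i • n_H(q i)` with `λ i > 0` and the
motion rule `q (i+1) − q i = μ i • n_T(p (i+1))` with `μ i > 0`. -/
structure ClassicalTraj (H T : Set E2) where
  m : ℕ
  m_pos : 0 < m
  q : ℕ → E2
  p : ℕ → E2
  nq : ℕ → E2
  np : ℕ → E2
  lam : ℕ → ℝ
  mu : ℕ → ℝ
  q_mem : ∀ i, q i ∈ frontier H
  p_mem : ∀ i, p i ∈ frontier T
  q_periodic : ∀ i, q (i + m) = q i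
  p_periodic : ∀ i, p (i + m) = p i
  nq_spec : ∀ i, IsUniqueNormal H (q i) (nq i)
  np_spec : ∀ i, IsUniqueNormal T (p i) (np i)
  lam_pos : ∀ i, 0 < lam i
  mu_pos : ∀ i, 0 < mu i
  reflection : ∀ i, p (i + 1) - p i = (-(lam i)) • nq i
  motion : ∀ i, q (i + 1) - q i = mu i • np (i + 1)

/-- A trajectory is simple if it does not traverse the same closed route more than once,
i.e. it has no period smaller than `m`. -/
def ClassicalTraj.IsSimple {H T : Set E2} (τ : ClassicalTraj H T) : Prop :=
  ∀ d : ℕ, 0 < d → d < τ.m → ¬(∀ i, τ.q (i + d) = τ.q i ∧ τ.p (i + d) = τ.p i)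

/-- The length of the trajectory, measured in the norm `‖v‖_T = max_{p ∈ T} ⟨p, v⟩`
(with `T = H°`). -/
noncomputable def ClassicalTraj.length {H T : Set E2} (τ : ClassicalTraj H T) : ℝ :=
  ∑ i ∈ Finset.range τ.m, sSup ((fun p => ⟪p, τ.q (i + 1) - τ.q i⟫) '' T)

/-- The trace of a trajectory in phase space `∂H × ∂T`: the union of the segments swept by
the coordinate while the momentum is constant, and by the momentum while the coordinate is
constant. -/
noncomputable def ClassicalTraj.trace {H T : Set E2} (τ : ClassicalTraj H T) :
    Set (E2 × E2) :=
  ⋃ i ∈ Finset.range τ.m,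
    ((fun x => (x, τ.p (i + 1))) '' segment ℝ (τ.q i) (τ.q (i + 1)) ∪
      (fun y => (τ.q i, y)) '' segment ℝ (τ.p i) (τ.p (i + 1)))

/-- `V` and `W` are dual triples of vertices: `V` is an equilateral triangle centred at the origin
and `W` is the rescaled copy of it for which `q = ∑ i, ⟪W i, q⟫ • V i`. -/
structure DualTriples (V W : Fin 3 → E2) : Prop where
  inner_self : ∀ i, ⟪V i, W i⟫ = 2 / 3
  inner_ne : ∀ i j, i ≠ j → ⟪V i, W j⟫ = -1 / 3
  sum_left : ∑ i, V i = 0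
  sum_right : ∑ i, W i = 0
  expand_left : ∀ q, q = ∑ i, ⟪W i, q⟫ • V i
  expand_right : ∀ p, p = ∑ i, ⟪V i, p⟫ • W i

/-- The three indices `i`, `j`, `k` of the triangle are pairwise distinct. -/
structure Distinct (i j k : Fin 3) : Prop where
  ij : i ≠ j
  jk : j ≠ k
  ik : i ≠ k

namespace Distinct

variable {i j k : Fin 3}

lemma rotate (h : Distinct i j k) : Distinct j k i := ⟨h.jk, h.ik.symm, h.ij.symm⟩

lemma swap (h : Distinct i j k) : Distinct i k j := ⟨h.ik, h.jk.symm, h.ij⟩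

lemma eq_or (h : Distinct i j k) (l : Fin 3) : l = i ∨ l = j ∨ l = k := by
  obtain ⟨h1, h2, h3⟩ := h
  lia

lemma eq_or_swap {j' k' : Fin 3} (h : Distinct i j k) (h' : Distinct i j' k') :
    (j' = j ∧ k' = k) ∨ (j' = k ∧ k' = j) := by
  obtain ⟨h1, h2, h3⟩ := h
  obtain ⟨h4, h5, h6⟩ := h'
  lia

lemma forall_iff (h : Distinct i j k) {P : Fin 3 → Prop} : (∀ l, P l) ↔ P i ∧ P j ∧ P k := by
  refine ⟨fun H => ⟨H i, H j, H k⟩, fun H l => ?_⟩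
  rcases h.eq_or l with rfl | rfl | rfl
  exacts [H.1, H.2.1, H.2.2]

lemma sum_eq (h : Distinct i j k) {M : Type*} [AddCommMonoid M] (f : Fin 3 → M) :
    ∑ l, f l = f i + f j + f k := by
  have : (Finset.univ : Finset (Fin 3)) = {i, j, k} := by
    ext l
    simpa using h.eq_or l
  rw [this, Finset.sum_insert (by simp [h.ij, h.ik]), Finset.sum_pair h.jk, add_assoc]

lemma exists_of_ne {i j : Fin 3} (h : i ≠ j) : ∃ k, Distinct i j k := by
  revert i j
  suffices ∀ i j : Fin 3, i ≠ j → ∃ k, i ≠ j ∧ j ≠ k ∧ i ≠ k from fun i j h =>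
    (this i j h).imp fun k hk => ⟨hk.1, hk.2.1, hk.2.2⟩
  decide

lemma exists_of_index (i : Fin 3) : ∃ j k, Distinct i j k :=
  have ⟨j, hj⟩ := exists_ne i
  ⟨j, exists_of_ne hj.symm⟩

end Distinct

namespace DualTriples

variable {V W : Fin 3 → E2} {i j k : Fin 3}

lemma symm (h : DualTriples V W) : DualTriples W V where
  inner_self i := by rw [real_inner_comm, h.inner_self]
  inner_ne i j hij := by rw [real_inner_comm, h.inner_ne _ _ hij.symm]
  sum_left := h.sum_right
  sum_right := h.sum_left
  expand_left := h.expand_right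
  expand_right := h.expand_left

lemma ext (h : DualTriples V W) {q q' : E2} (H : ∀ l, ⟪W l, q⟫ = ⟪W l, q'⟫) : q = q' := by
  rw [h.expand_left q, h.expand_left q']
  simp only [H]

lemma sum_coord (h : DualTriples V W) (d : Distinct i j k) (q : E2) :
    ⟪W i, q⟫ + ⟪W j, q⟫ + ⟪W k, q⟫ = 0 := by
  rw [← inner_add_left, ← inner_add_left, ← d.sum_eq, h.sum_right, inner_zero_left]

lemma inner_eq (h : DualTriples V W) (d : Distinct i j k) (p q : E2) :
    ⟪p, q⟫ = ⟪V i, p⟫ * ⟪W i, q⟫ + ⟪V j, p⟫ * ⟪W j, q⟫ + ⟪V k, p⟫ * ⟪W k, q⟫ := by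
  conv_lhs => rw [h.expand_right p, d.sum_eq]
  simp only [inner_add_left, real_inner_smul_left]

/-- Inner products of the vertices along three distinct indices. -/
lemma inner_table (h : DualTriples V W) (d : Distinct i j k) :
    (⟪W i, V i⟫ = 2 / 3 ∧ ⟪W j, V j⟫ = 2 / 3 ∧ ⟪W k, V k⟫ = 2 / 3) ∧
    (⟪W i, V j⟫ = -1 / 3 ∧ ⟪W j, V i⟫ = -1 / 3) ∧ (⟪W i, V k⟫ = -1 / 3 ∧ ⟪W k, V i⟫ = -1 / 3) ∧
    (⟪W j, V k⟫ = -1 / 3 ∧ ⟪W k, V j⟫ = -1 / 3) := by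
  have := h.symm.inner_ne
  exact ⟨⟨h.symm.inner_self i, h.symm.inner_self j, h.symm.inner_self k⟩,
    ⟨this _ _ d.ij, this _ _ d.ij.symm⟩, ⟨this _ _ d.ik, this _ _ d.ik.symm⟩,
    this _ _ d.jk, this _ _ d.jk.symm⟩

/-- The point with prescribed coordinates. -/
lemma coord_point (h : DualTriples V W) (d : Distinct i j k) {a b c : ℝ} (s : a + b + c = 0) :
    ⟪W i, a • V i + b • V j + c • V k⟫ = a ∧ ⟪W j, a • V i + b • V j + c • V k⟫ = b ∧
      ⟪W k, a • V i + b • V j + c • V k⟫ = c := by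
  obtain ⟨⟨h1, h2, h3⟩, ⟨h4, h5⟩, ⟨h6, h7⟩, h8, h9⟩ := h.inner_table d
  simp only [inner_add_right, real_inner_smul_right, h1, h2, h3, h4, h5, h6, h7, h8, h9]
  refine ⟨?_, ?_, ?_⟩ <;> linarith

lemma mem_polar_hull {p : E2} :
    p ∈ polarBody (convexHull ℝ (Set.range V)) ↔ ∀ i, ⟪V i, p⟫ ≤ 1 := by
  constructor
  · intro hp i
    rw [real_inner_comm]
    exact hp _ (subset_convexHull ℝ _ ⟨i, rfl⟩)
  · intro hp
    refine convexHull_min (t := {q | ⟪p, q⟫ ≤ 1}) ?_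
      (convex_halfSpace_le (innerₛₗ ℝ p).isLinear 1)
    rintro _ ⟨i, rfl⟩
    simpa [real_inner_comm] using hp i

lemma coord_mem_of_mem_hull (h : DualTriples V W) {q : E2} (hq : q ∈ convexHull ℝ (Set.range V))
    (i : Fin 3) : -1 / 3 ≤ ⟪W i, q⟫ ∧ ⟪W i, q⟫ ≤ 2 / 3 := by
  have key : ∀ l, -1 / 3 ≤ ⟪W i, V l⟫ ∧ ⟪W i, V l⟫ ≤ 2 / 3 := fun l => by
    by_cases hil : i = l
    · subst hil; rw [h.symm.inner_self]; norm_num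
    · rw [h.symm.inner_ne _ _ hil]; norm_num
  constructor
  · refine convexHull_min (t := {q | -1 / 3 ≤ ⟪W i, q⟫}) ?_
      (convex_halfSpace_ge (innerₛₗ ℝ (W i)).isLinear _) hq
    rintro _ ⟨l, rfl⟩
    exact (key l).1
  · refine convexHull_min (t := {q | ⟪W i, q⟫ ≤ 2 / 3}) ?_
      (convex_halfSpace_le (innerₛₗ ℝ (W i)).isLinear _) hq
    rintro _ ⟨l, rfl⟩
    exact (key l).2

lemma combo_mem_hull {i j k : Fin 3} {a b c : ℝ} (ha : 0 ≤ a) (hb : 0 ≤ b) (hc : 0 ≤ c)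
    (h1 : a + b + c = 1) : a • V i + b • V j + c • V k ∈ convexHull ℝ (Set.range V) := by
  have hi := subset_convexHull ℝ (Set.range V) ⟨i, rfl⟩
  have hj := subset_convexHull ℝ (Set.range V) ⟨j, rfl⟩
  have hk := subset_convexHull ℝ (Set.range V) ⟨k, rfl⟩
  have := (convex_convexHull ℝ (Set.range V)).sum_mem (t := Finset.univ) (w := ![a, b, c])
    (z := ![V i, V j, V k]) (by simp [Fin.forall_fin_succ, *]) (by simp [Fin.sum_univ_three, h1])
    (by simp [Fin.forall_fin_succ, hi, hj, hk])
  simpa [Fin.sum_univ_three] using this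

/-- The difference body of the triangle is the hexagon `{q : |⟪W i, q⟫| ≤ 1 for all i}`. -/
lemma mem_hexagon (h : DualTriples V W) {q : E2} :
    q ∈ convexHull ℝ (Set.range V) - convexHull ℝ (Set.range V) ↔
      ∀ i, -1 ≤ ⟪W i, q⟫ ∧ ⟪W i, q⟫ ≤ 1 := by
  constructor
  · rintro ⟨u, hu, v, hv, rfl⟩ i
    have h1 := h.coord_mem_of_mem_hull hu i
    have h2 := h.coord_mem_of_mem_hull hv i
    simp only [inner_sub_right]
    constructor <;> linarith
  · intro hq
    have two_neg : ∀ {i j k}, Distinct i j k → ⟪W j, q⟫ ≤ 0 → ⟪W k, q⟫ ≤ 0 →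
        q ∈ convexHull ℝ (Set.range V) - convexHull ℝ (Set.range V) := by
      intro i j k d hj hk
      have s := h.sum_coord d q
      refine ⟨_, subset_convexHull ℝ (Set.range V) ⟨i, rfl⟩, _,
        combo_mem_hull (i := i) (j := j) (k := k) (a := 1 - ⟪W i, q⟫) (b := -⟪W j, q⟫) (c := -⟪W k, q⟫)
        (by linarith [(hq i).2]) (by linarith) (by linarith) (by linarith), ?_⟩
      conv_rhs => rw [h.expand_left q, d.sum_eq]
      module
    have two_pos : ∀ {i j k}, Distinct i j k → 0 ≤ ⟪W j, q⟫ → 0 ≤ ⟪W k, q⟫ →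
        q ∈ convexHull ℝ (Set.range V) - convexHull ℝ (Set.range V) := by
      intro i j k d hj hk
      have s := h.sum_coord d q
      refine ⟨_, combo_mem_hull (i := i) (j := j) (k := k) (a := 1 + ⟪W i, q⟫) (b := ⟪W j, q⟫) (c := ⟪W k, q⟫)
        (by linarith [(hq i).1]) (by linarith) (by linarith) (by linarith), _,
        subset_convexHull ℝ (Set.range V) ⟨i, rfl⟩, ?_⟩
      conv_rhs => rw [h.expand_left q, d.sum_eq]
      module
    have d : Distinct 0 1 2 := ⟨by decide, by decide, by decide⟩
    rcases le_total 0 ⟪W 0, q⟫ with h0 | h0 <;> rcases le_total 0 ⟪W 1, q⟫ with h1 | h1 <;>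
      rcases le_total 0 ⟪W 2, q⟫ with h2 | h2
    all_goals first
      | exact two_pos d h1 h2
      | exact two_neg d h1 h2
      | exact two_pos d.rotate h2 h0
      | exact two_neg d.rotate h2 h0
      | exact two_pos d.rotate.rotate h0 h1
      | exact two_neg d.rotate.rotate h0 h1

end DualTriples

/-- The vertices of an equilateral triangle centred at the origin are part of dual triples. -/
lemma exists_dualTriples {A B C : E2} (hpos : 0 < dist A B) (h1 : dist A B = dist B C)
    (h2 : dist B C = dist C A) (hcent : A + B + C = 0) :
    ∃ W, DualTriples ![A, B, C] W := by
  obtain rfl : C = -A - B := by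
    rw [← sub_eq_zero, ← hcent]; module
  set s : ℝ := A 0 ^ 2 + A 1 ^ 2 with hs
  simp only [EuclideanSpace.dist_eq, Fin.sum_univ_two, Real.dist_eq, sq_abs] at hpos h1 h2
  rw [Real.sqrt_inj (by positivity) (by positivity)] at h1 h2
  rw [Real.sqrt_pos] at hpos
  simp only [PiLp.sub_apply, PiLp.neg_apply] at h1 h2
  have hB : B 0 ^ 2 + B 1 ^ 2 = s := by rw [hs]; linarith
  have hAB : A 0 * B 0 + A 1 * B 1 = -s / 2 := by rw [hs]; linarith
  have hs0 : 0 < s := by linarith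
  clear_value s
  -- the entries of the frame operator `∑ i, V i ⊗ V i`
  set M : ℝ := 2 * A 0 ^ 2 + 2 * B 0 ^ 2 + 2 * (A 0 * B 0) with hM
  set N : ℝ := 2 * A 1 ^ 2 + 2 * B 1 ^ 2 + 2 * (A 1 * B 1) with hN
  set L : ℝ := 2 * (A 0 * A 1) + 2 * (B 0 * B 1) + A 0 * B 1 + A 1 * B 0 with hL
  have htrace : M + N = 3 * s := by rw [hM, hN]; linarith
  have hdet : M * N - L ^ 2 = 9 / 4 * s ^ 2 := by
    have hlagrange : (A 0 * B 1 - A 1 * B 0) ^ 2 + (A 0 * B 0 + A 1 * B 1) ^ 2 = s * s := by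
      nth_rewrite 1 [hs]
      rw [← hB]
      ring
    rw [hAB] at hlagrange
    have : M * N - L ^ 2 = 3 * (A 0 * B 1 - A 1 * B 0) ^ 2 := by rw [hM, hN, hL]; ring
    rw [this]
    linarith
  have hzero : (M - N) ^ 2 + 4 * L ^ 2 = 0 := by
    have : (M + N) ^ 2 - 4 * (M * N - L ^ 2) = 0 := by rw [htrace, hdet]; ring
    linarith
  have hL0 : L = 0 := pow_eq_zero_iff two_ne_zero |>.1 <|
    le_antisymm (by linarith only [hzero, sq_nonneg (M - N)]) (sq_nonneg L)
  have hMN : M - N = 0 := pow_eq_zero_iff two_ne_zero |>.1 <|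
    le_antisymm (by linarith only [hzero, sq_nonneg L]) (sq_nonneg _)
  have hM' : M = 3 * s / 2 := by linarith
  have hN' : N = 3 * s / 2 := by linarith
  have inner_coord : ∀ x y : E2, ⟪x, y⟫ = x 0 * y 0 + x 1 * y 1 := fun x y => by
    simp [PiLp.inner_apply, mul_comm]
  have expand : ∀ q : E2, q = ∑ i, ((2 / (3 * s)) * ⟪![A, B, -A - B] i, q⟫) • ![A, B, -A - B] i := by
    intro q
    ext l
    fin_cases l
    · have : q 0 = 2 / (3 * s) * (M * q 0 + L * q 1) := by
        rw [hM', hL0]; field_simp; ring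
      simp only [Fin.sum_univ_three, Fin.zero_eta, PiLp.add_apply, PiLp.smul_apply,
        inner_coord, smul_eq_mul, Matrix.cons_val, PiLp.sub_apply, PiLp.neg_apply]
      conv_lhs => rw [this]
      rw [hM, hL]
      ring
    · have : q 1 = 2 / (3 * s) * (L * q 0 + N * q 1) := by
        rw [hN', hL0]; field_simp; ring
      simp only [Fin.sum_univ_three, Fin.mk_one, PiLp.add_apply, PiLp.smul_apply,
        inner_coord, smul_eq_mul, Matrix.cons_val, PiLp.sub_apply, PiLp.neg_apply]
      conv_lhs => rw [this]
      rw [hN, hL]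
      ring
  have sum_zero : ∑ i, ![A, B, -A - B] i = 0 := by
    simp only [Fin.sum_univ_three, Matrix.cons_val]; module
  refine ⟨fun i => (2 / (3 * s)) • ![A, B, -A - B] i, ?_, ?_, sum_zero, ?_, ?_, ?_⟩
  · intro i
    fin_cases i <;> simp only [Fin.zero_eta, Fin.mk_one, Fin.reduceFinMk, Matrix.cons_val,
      PiLp.smul_apply, smul_eq_mul, inner_coord, PiLp.sub_apply, PiLp.neg_apply] <;> field_simp <;> linarith
  · intro i j hij
    fin_cases i <;> fin_cases j <;> first | exact absurd rfl hij | skip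
    all_goals
      simp only [Fin.zero_eta, Fin.mk_one, Fin.reduceFinMk, Matrix.cons_val,
        PiLp.smul_apply, smul_eq_mul, inner_coord, PiLp.sub_apply, PiLp.neg_apply]
      field_simp
      linarith
  · rw [← Finset.smul_sum, sum_zero, smul_zero]
  · intro q
    simpa only [real_inner_smul_left] using expand q
  · intro q
    simpa only [smul_smul, mul_comm] using expand q

/-- The triangle with vertices `V`. -/
abbrev triangle (V : Fin 3 → E2) : Set E2 := convexHull ℝ (Set.range V)

/-- The difference body of the triangle with vertices `V`. -/
abbrev hexagon (V : Fin 3 → E2) : Set E2 := triangle V - triangle V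

namespace DualTriples

variable {V W : Fin 3 → E2} {i j k : Fin 3} {p q u : E2}

lemma isClosed_polar : IsClosed (polarBody (triangle V)) := by
  have : polarBody (triangle V) = ⋂ i, {p | ⟪V i, p⟫ ≤ 1} := by
    ext p; simp [mem_polar_hull]
  rw [this]
  exact isClosed_iInter fun i => isClosed_le (by fun_prop) (by fun_prop)

lemma isClosed_hexagon (h : DualTriples V W) : IsClosed (hexagon V) := by
  have : hexagon V = ⋂ i, (fun q => ⟪W i, q⟫) ⁻¹' Set.Icc (-1) 1 := by
    ext p; simp [h.mem_hexagon]
  rw [this]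
  exact isClosed_iInter fun i => isClosed_Icc.preimage (by fun_prop)

lemma exists_of_mem_frontier_polar (hp : p ∈ frontier (polarBody (triangle V))) :
    ∃ i, ⟪V i, p⟫ = 1 := by
  by_contra! hne
  refine hp.2 (mem_interior.2 ⟨⋂ i, {p | ⟪V i, p⟫ < 1}, fun x hx => ?_,
    isOpen_iInter_of_finite fun i => isOpen_lt (by fun_prop) (by fun_prop), ?_⟩)
  · simp only [Set.mem_iInter, Set.mem_ofPred_eq] at hx
    exact mem_polar_hull.2 fun i => (hx i).le
  · simp only [Set.mem_iInter, Set.mem_ofPred_eq]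
    exact fun i => (mem_polar_hull.1 (isClosed_polar.frontier_subset hp) i).lt_of_ne (hne i)

lemma exists_of_mem_frontier_hexagon (h : DualTriples V W) (hq : q ∈ frontier (hexagon V)) :
    ∃ i, ⟪W i, q⟫ = 1 ∨ ⟪W i, q⟫ = -1 := by
  by_contra! hne
  refine hq.2 (mem_interior.2 ⟨⋂ i, (fun q => ⟪W i, q⟫) ⁻¹' Set.Ioo (-1) 1, fun x hx => ?_,
    isOpen_iInter_of_finite fun i => isOpen_Ioo.preimage (by fun_prop), ?_⟩)
  · simp only [Set.mem_iInter, Set.mem_preimage, Set.mem_Ioo] at hx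
    exact h.mem_hexagon.2 fun i => ⟨(hx i).1.le, (hx i).2.le⟩
  · simp only [Set.mem_iInter, Set.mem_preimage, Set.mem_Ioo]
    intro i
    have := h.mem_hexagon.1 (h.isClosed_hexagon.frontier_subset hq) i
    exact ⟨this.1.lt_of_ne (hne i).2.symm, this.2.lt_of_ne (hne i).1⟩

end DualTriples

/-- A point of `S` at which a vector of the polar body attains the value `1` is on the boundary. -/
lemma mem_frontier_of_inner_eq_one {S : Set E2} {q u : E2} (hq : q ∈ S) (hu : u ∈ polarBody S)
    (h1 : ⟪u, q⟫ = 1) : q ∈ frontier S := by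
  refine ⟨subset_closure hq, fun hmem => ?_⟩
  have htend : Filter.Tendsto (fun t : ℝ => (1 + t) • q) (nhdsWithin 0 (Set.Ioi 0)) (nhds q) := by
    have : Continuous fun t : ℝ => (1 + t) • q := by fun_prop
    simpa using (this.tendsto 0).mono_left nhdsWithin_le_nhds
  obtain ⟨t, ht, ht0⟩ :=
    ((htend.eventually (mem_interior_iff_mem_nhds.1 hmem)).and self_mem_nhdsWithin).exists
  have := hu _ ht
  rw [real_inner_smul_right, h1] at this
  linarith [ht0]

namespace DualTriples

variable {V W : Fin 3 → E2} {i j k : Fin 3} {p q u : E2}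

lemma vertex_mem_polar_polar (i : Fin 3) : V i ∈ polarBody (polarBody (triangle V)) :=
  fun _ hp => mem_polar_hull.1 hp i

lemma mem_polar_hexagon (h : DualTriples V W) (i : Fin 3) :
    W i ∈ polarBody (hexagon V) ∧ -W i ∈ polarBody (hexagon V) := by
  refine ⟨fun q hq => (h.mem_hexagon.1 hq i).2, fun q hq => ?_⟩
  rw [inner_neg_left]
  linarith [(h.mem_hexagon.1 hq i).1]

lemma vertex_injective (h : DualTriples V W) : Function.Injective V := by
  intro i j hij
  by_contra hne
  have h1 := h.inner_self j
  rw [← hij, h.inner_ne _ _ hne] at h1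
  norm_num at h1

lemma ne_neg (h : DualTriples V W) (i j : Fin 3) : V i ≠ -V j := by
  intro hij
  have h1 := h.inner_self j
  rw [← neg_neg (V j), ← hij, inner_neg_left] at h1
  by_cases hne : i = j
  · rw [hne, h.inner_self] at h1
    norm_num at h1
  · rw [h.inner_ne _ _ hne] at h1
    norm_num at h1

/-- The normals of the polar triangle are the vertices of the triangle. -/
lemma normal_polar (h : DualTriples V W) (hp : p ∈ frontier (polarBody (triangle V)))
    (hu : IsUniqueNormal (polarBody (triangle V)) p u) :
    ∃ i, u = V i ∧ ⟪V i, p⟫ = 1 ∧ ∀ j, j ≠ i → ⟪V j, p⟫ < 1 := by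
  obtain ⟨i, hi⟩ := exists_of_mem_frontier_polar hp
  have hui := hu.2.2 _ (vertex_mem_polar_polar i) hi
  refine ⟨i, hui.symm, hi, fun j hj => lt_of_le_of_ne
    (mem_polar_hull.1 (isClosed_polar.frontier_subset hp) j) fun h1 => hj ?_⟩
  exact h.vertex_injective ((hu.2.2 _ (vertex_mem_polar_polar j) h1).trans hui.symm)

/-- The normals of the hexagon are the vectors `W i` and `-W i`. -/
lemma normal_hexagon (h : DualTriples V W) (hq : q ∈ frontier (hexagon V))
    (hu : IsUniqueNormal (hexagon V) q u) :
    ∃ i, (u = W i ∧ ⟪W i, q⟫ = 1 ∨ u = -W i ∧ ⟪W i, q⟫ = -1) ∧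
      ∀ j, j ≠ i → -1 < ⟪W j, q⟫ ∧ ⟪W j, q⟫ < 1 := by
  have pos : ∀ {i}, ⟪W i, q⟫ = 1 → W i = u := fun hi => hu.2.2 _ (h.mem_polar_hexagon _).1 hi
  have neg : ∀ {i}, ⟪W i, q⟫ = -1 → -W i = u := fun hi =>
    hu.2.2 _ (h.mem_polar_hexagon _).2 (by rw [inner_neg_left, hi, neg_neg])
  have hmem := h.mem_hexagon.1 (h.isClosed_hexagon.frontier_subset hq)
  have inj := h.symm.vertex_injective
  obtain ⟨i, hi⟩ := h.exists_of_mem_frontier_hexagon hq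
  refine ⟨i, hi.imp (fun hi => ⟨(pos hi).symm, hi⟩) (fun hi => ⟨(neg hi).symm, hi⟩), fun j hj =>
    ⟨lt_of_le_of_ne (hmem j).1 fun h1 => ?_, lt_of_le_of_ne (hmem j).2 fun h1 => ?_⟩⟩
  · rcases hi with hi | hi
    · exact h.symm.ne_neg _ _ ((pos hi).trans (neg h1.symm).symm)
    · exact hj (inj (neg_injective ((neg h1.symm).trans (neg hi).symm)))
  · rcases hi with hi | hi
    · exact hj (inj ((pos h1).trans (pos hi).symm))
    · exact h.symm.ne_neg _ _ ((pos h1).trans (neg hi).symm)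

lemma edge_polar (h : DualTriples V W) (d : Distinct i j k) (hi : ⟪V i, p⟫ = 1)
    (hj : ⟪V j, p⟫ < 1) (hk : ⟪V k, p⟫ < 1) :
    p ∈ frontier (polarBody (triangle V)) ∧ IsUniqueNormal (polarBody (triangle V)) p (V i) := by
  have hp : p ∈ polarBody (triangle V) := mem_polar_hull.2 (d.forall_iff.2 ⟨hi.le, hj.le, hk.le⟩)
  refine ⟨mem_frontier_of_inner_eq_one hp (vertex_mem_polar_polar i) hi,
    vertex_mem_polar_polar i, hi, fun v hv h1 => ?_⟩
  -- `v` lies in the triangle, since it pairs to at most `1` with the vertices `-3 • W l`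
  have hw : ∀ l, -1 / 3 ≤ ⟪W l, v⟫ := fun l => by
    have hl : (-3 : ℝ) • W l ∈ polarBody (triangle V) := mem_polar_hull.2 fun l' => by
      rw [real_inner_smul_right]
      by_cases hne : l' = l
      · rw [hne, h.inner_self]; norm_num
      · rw [h.inner_ne _ _ hne]; norm_num
    have := hv _ hl
    rw [real_inner_smul_right, real_inner_comm] at this
    linarith
  have s := h.sum_coord d v
  have s' := h.symm.sum_coord d p
  rw [real_inner_comm, h.inner_eq d, hi] at h1
  have key : (⟪W j, v⟫ + 1 / 3) * (1 - ⟪V j, p⟫) + (⟪W k, v⟫ + 1 / 3) * (1 - ⟪V k, p⟫) = 0 := by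
    linear_combination s - h1 - 1 / 3 * s' + hi / 3
  have hj' : ⟪W j, v⟫ = -1 / 3 := by nlinarith [hw j, hw k]
  have hk' : ⟪W k, v⟫ = -1 / 3 := by nlinarith [hw j, hw k]
  obtain ⟨⟨t, -⟩, ⟨-, tj⟩, ⟨-, tk⟩, -⟩ := h.inner_table d
  refine h.ext (d.forall_iff.2 ⟨?_, ?_, ?_⟩) <;> linarith

lemma coord_sub_le {v : E2} (hv : v ∈ polarBody (hexagon V)) (i j : Fin 3) :
    ⟪V i, v⟫ - ⟪V j, v⟫ ≤ 1 := by
  have := hv (V i - V j) ⟨_, subset_convexHull ℝ _ ⟨i, rfl⟩, _, subset_convexHull ℝ _ ⟨j, rfl⟩, rfl⟩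
  rwa [inner_sub_right, real_inner_comm, real_inner_comm (V j)] at this

lemma edge_hexagon_pos (h : DualTriples V W) (d : Distinct i j k) (hi : ⟪W i, q⟫ = 1)
    (hj : -1 < ⟪W j, q⟫) (hk : -1 < ⟪W k, q⟫) :
    q ∈ frontier (hexagon V) ∧ IsUniqueNormal (hexagon V) q (W i) := by
  have s := h.sum_coord d q
  have hq : q ∈ hexagon V := h.mem_hexagon.2 (d.forall_iff.2
    ⟨⟨by linarith, by linarith⟩, ⟨by linarith, by linarith⟩, by linarith, by linarith⟩)
  have hW := (h.mem_polar_hexagon i).1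
  refine ⟨mem_frontier_of_inner_eq_one hq hW hi, hW, hi, fun v hv h1 => ?_⟩
  have s' := h.symm.sum_coord d v
  have hij := coord_sub_le hv i j
  have hik := coord_sub_le hv i k
  rw [h.inner_eq d, hi] at h1
  have key : ⟪W j, q⟫ * (1 - (⟪V i, v⟫ - ⟪V j, v⟫)) + ⟪W k, q⟫ * (1 - (⟪V i, v⟫ - ⟪V k, v⟫)) = 0 := by
    linear_combination h1 + (1 - ⟪V i, v⟫) * s - (1 - ⟪V i, v⟫) * hi
  have hij' : ⟪V i, v⟫ - ⟪V j, v⟫ = 1 := by nlinarith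
  have hik' : ⟪V i, v⟫ - ⟪V k, v⟫ = 1 := by nlinarith
  obtain ⟨⟨t, -⟩, ⟨-, tj⟩, ⟨-, tk⟩, -⟩ := h.symm.inner_table d
  refine h.symm.ext (d.forall_iff.2 ⟨?_, ?_, ?_⟩) <;> linarith

lemma edge_hexagon_neg (h : DualTriples V W) (d : Distinct i j k) (hi : ⟪W i, q⟫ = -1)
    (hj : ⟪W j, q⟫ < 1) (hk : ⟪W k, q⟫ < 1) :
    q ∈ frontier (hexagon V) ∧ IsUniqueNormal (hexagon V) q (-W i) := by
  have s := h.sum_coord d q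
  have hq : q ∈ hexagon V := h.mem_hexagon.2 (d.forall_iff.2
    ⟨⟨by linarith, by linarith⟩, ⟨by linarith, by linarith⟩, by linarith, by linarith⟩)
  have hW := (h.mem_polar_hexagon i).2
  have hi' : ⟪-W i, q⟫ = 1 := by rw [inner_neg_left, hi, neg_neg]
  refine ⟨mem_frontier_of_inner_eq_one hq hW hi', hW, hi', fun v hv h1 => ?_⟩
  have hneg := (h.edge_hexagon_pos (q := -q) d (by rw [inner_neg_right, hi, neg_neg])
    (by rw [inner_neg_right]; linarith) (by rw [inner_neg_right]; linarith)).2.2.2 (-v)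
    (fun x hx => ?_) (by rwa [inner_neg_neg])
  · rw [← hneg, neg_neg]
  · rw [inner_neg_left, ← inner_neg_right]
    refine hv _ (h.mem_hexagon.2 fun l => ?_)
    have := h.mem_hexagon.1 hx l
    rw [inner_neg_right]
    constructor <;> linarith

end DualTriples

namespace ClassicalTraj

variable {V W : Fin 3 → E2} {i j k : Fin 3} {n : ℕ}

/-- The trajectory is reflected at time `n` on the edge of the hexagon with outer normal `W i`,
while its momentum is on the edge with outer normal `V i`. -/
structure PosBounce (W : Fin 3 → E2) (τ : ClassicalTraj (hexagon V) (polarBody (triangle V)))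
    (n : ℕ) (i : Fin 3) : Prop where
  nq_eq : τ.nq n = W i
  np_eq : τ.np n = V i
  coord_q : ⟪W i, τ.q n⟫ = 1
  coord_p : ⟪V i, τ.p n⟫ = 1
  bound_q : ∀ l, l ≠ i → -1 < ⟪W l, τ.q n⟫ ∧ ⟪W l, τ.q n⟫ < 1
  bound_p : ∀ l, l ≠ i → ⟪V l, τ.p n⟫ < 1

/-- The trajectory is reflected at time `n` on the edge of the hexagon with outer normal `-W k`,
while its momentum is on the edge with outer normal `V j`. -/
structure NegBounce (W : Fin 3 → E2) (τ : ClassicalTraj (hexagon V) (polarBody (triangle V)))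
    (n : ℕ) (j k : Fin 3) : Prop where
  nq_eq : τ.nq n = -W k
  np_eq : τ.np n = V j
  coord_q : ⟪W k, τ.q n⟫ = -1
  coord_p : ⟪V j, τ.p n⟫ = 1
  bound_q : ∀ l, l ≠ k → -1 < ⟪W l, τ.q n⟫ ∧ ⟪W l, τ.q n⟫ < 1
  bound_p : ∀ l, l ≠ j → ⟪V l, τ.p n⟫ < 1

variable (τ : ClassicalTraj (hexagon V) (polarBody (triangle V)))

lemma coord_q_succ (n : ℕ) (l : Fin 3) :
    ⟪W l, τ.q (n + 1)⟫ = ⟪W l, τ.q n⟫ + τ.mu n * ⟪W l, τ.np (n + 1)⟫ := by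
  rw [← real_inner_smul_right, ← τ.motion, inner_sub_right]
  ring

lemma coord_p_succ (n : ℕ) (l : Fin 3) :
    ⟪V l, τ.p (n + 1)⟫ = ⟪V l, τ.p n⟫ - τ.lam n * ⟪V l, τ.nq n⟫ := by
  have := congrArg (fun v => ⟪V l, v⟫) (τ.reflection n)
  simp only [inner_sub_right, real_inner_smul_right] at this
  linarith

lemma posBounce_or_negBounce (h : DualTriples V W) (n : ℕ) :
    (∃ i, PosBounce W τ n i) ∨ ∃ j k, j ≠ k ∧ NegBounce W τ n j k := by
  obtain ⟨e, he, he1, he2⟩ := h.normal_polar (τ.p_mem n) (τ.np_spec n)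
  obtain ⟨f, hf, hf2⟩ := h.normal_hexagon (τ.q_mem n) (τ.nq_spec n)
  have hle := DualTriples.mem_polar_hull.1
    (DualTriples.isClosed_polar.frontier_subset (τ.p_mem (n + 1))) e
  have hlam := τ.lam_pos n
  rw [coord_p_succ, he1] at hle
  rcases hf with ⟨hf, hf1⟩ | ⟨hf, hf1⟩
  · by_cases hef : e = f
    · subst hef
      exact .inl ⟨e, hf, he, hf1, he1, hf2, he2⟩
    · rw [hf, h.inner_ne _ _ hef] at hle
      linarith
  · by_cases hef : e = f
    · rw [hf, hef, inner_neg_right, h.inner_self] at hle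
      linarith
    · exact .inr ⟨e, f, hef, hf, he, hf1, he1, hf2, he2⟩

variable {τ}

lemma PosBounce.step (h : DualTriples V W) (H : PosBounce W τ n i) :
    ∃ j k, Distinct i j k ∧ NegBounce W τ (n + 1) j k ∧ ⟪V k, τ.p n⟫ < ⟪V j, τ.p n⟫ ∧
      ⟪V i, τ.p (n + 1)⟫ = 2 * ⟪V j, τ.p n⟫ - 1 ∧
      ⟪W i, τ.q (n + 1)⟫ = 1 + ⟪W j, τ.q n⟫ ∧ ⟪W j, τ.q (n + 1)⟫ = -⟪W j, τ.q n⟫ ∧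
      τ.mu n = -3 * ⟪W j, τ.q n⟫ := by
  have hlam := τ.lam_pos n
  have hmu := τ.mu_pos n
  have hxi := τ.coord_p_succ n i
  rw [H.nq_eq, H.coord_p, h.inner_self] at hxi
  obtain ⟨e, he, hei, hpe, hpe2⟩ : ∃ e, τ.np (n + 1) = V e ∧ e ≠ i ∧ ⟪V e, τ.p (n + 1)⟫ = 1 ∧
      ∀ l, l ≠ e → ⟪V l, τ.p (n + 1)⟫ < 1 := by
    obtain ⟨e, he, he1, he2⟩ := h.normal_polar (τ.p_mem (n + 1)) (τ.np_spec (n + 1))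
    refine ⟨e, he, ?_, he1, he2⟩
    rintro rfl
    linarith
  obtain ⟨k, d⟩ := Distinct.exists_of_ne hei.symm
  have hxe := τ.coord_p_succ n e
  have hxk := τ.coord_p_succ n k
  rw [H.nq_eq, h.inner_ne _ _ hei] at hxe
  rw [H.nq_eq, h.inner_ne _ _ d.ik.symm] at hxk
  have hxk1 := hpe2 k d.jk.symm
  have hqi := τ.coord_q_succ (W := W) n i
  have hqe := τ.coord_q_succ (W := W) n e
  have hqk := τ.coord_q_succ (W := W) n k
  rw [he, h.symm.inner_ne _ _ d.ij, H.coord_q] at hqi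
  rw [he, h.symm.inner_self] at hqe
  rw [he, h.symm.inner_ne _ _ d.jk.symm] at hqk
  have s := h.sum_coord d (τ.q n)
  rw [H.coord_q] at s
  have be := H.bound_q e hei
  have bk := H.bound_q k d.ik.symm
  have hmem := h.mem_hexagon.1 (h.isClosed_hexagon.frontier_subset (τ.q_mem (n + 1)))
  rcases τ.posBounce_or_negBounce h (n + 1) with ⟨f, F⟩ | ⟨j, f, hjf, F⟩
  · obtain rfl : f = e := h.vertex_injective (F.np_eq.symm.trans he)
    linarith [F.coord_q, (hmem k).1]
  · obtain rfl : j = e := h.vertex_injective (F.np_eq.symm.trans he)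
    have hq := F.coord_q
    rcases d.eq_or f with rfl | rfl | rfl
    · linarith [(hmem k).1]
    · exact absurd rfl hjf
    · exact ⟨j, f, d, F, by linarith, by linarith, by linarith, by linarith, by linarith⟩

lemma NegBounce.step (h : DualTriples V W) (d : Distinct i j k) (H : NegBounce W τ n j k) :
    PosBounce W τ (n + 1) k ∧
      2 * ⟪V i, τ.p (n + 1)⟫ = 2 * ⟪V i, τ.p n⟫ + ⟪V k, τ.p n⟫ - 1 ∧
      2 * ⟪V j, τ.p (n + 1)⟫ = 1 + ⟪V k, τ.p n⟫ ∧
      ⟪W i, τ.q (n + 1)⟫ = ⟪W i, τ.q n⟫ - 1 ∧ ⟪W j, τ.q (n + 1)⟫ = ⟪W j, τ.q n⟫ - 1 ∧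
      τ.mu n = 3 := by
  have hlam := τ.lam_pos n
  have hmu := τ.mu_pos n
  have hxi := τ.coord_p_succ n i
  have hxj := τ.coord_p_succ n j
  have hxk := τ.coord_p_succ n k
  rw [H.nq_eq, inner_neg_right, h.inner_ne _ _ d.ik] at hxi
  rw [H.nq_eq, inner_neg_right, h.inner_ne _ _ d.jk, H.coord_p] at hxj
  rw [H.nq_eq, inner_neg_right, h.inner_self] at hxk
  have hxi1 := H.bound_p i d.ij
  have bi := H.bound_q i d.ik
  have bj := H.bound_q j d.jk
  obtain ⟨he, hpk⟩ : τ.np (n + 1) = V k ∧ ⟪V k, τ.p (n + 1)⟫ = 1 := by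
    obtain ⟨e, he, he1, -⟩ := h.normal_polar (τ.p_mem (n + 1)) (τ.np_spec (n + 1))
    rcases d.eq_or e with rfl | rfl | rfl
    · linarith
    · linarith
    · exact ⟨he, he1⟩
  have hqi := τ.coord_q_succ (W := W) n i
  have hqj := τ.coord_q_succ (W := W) n j
  have hqk := τ.coord_q_succ (W := W) n k
  rw [he, h.symm.inner_ne _ _ d.ik] at hqi
  rw [he, h.symm.inner_ne _ _ d.jk] at hqj
  rw [he, h.symm.inner_self, H.coord_q] at hqk
  have s := h.sum_coord d (τ.q n)
  rw [H.coord_q] at s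
  have hmem := h.mem_hexagon.1 (h.isClosed_hexagon.frontier_subset (τ.q_mem (n + 1)))
  rcases τ.posBounce_or_negBounce h (n + 1) with ⟨f, F⟩ | ⟨e, f, hef, F⟩
  · obtain rfl : f = k := h.vertex_injective (F.np_eq.symm.trans he)
    have hq := F.coord_q
    exact ⟨F, by linarith, by linarith, by linarith, by linarith, by linarith⟩
  · obtain rfl : e = k := h.vertex_injective (F.np_eq.symm.trans he)
    have hq := F.coord_q
    rcases d.eq_or f with rfl | rfl | rfl
    · linarith [(hmem e).2]
    · linarith [(hmem e).2]
    · exact absurd rfl hef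

/-- The billiard dynamics starting on an edge with outer normal `W i` closes up after
exactly four steps. -/
lemma PosBounce.cycle (h : DualTriples V W) (H : PosBounce W τ n i) :
    (τ.q (n + 4) = τ.q n ∧ τ.p (n + 4) = τ.p n) ∧
      (τ.q (n + 5) = τ.q (n + 1) ∧ τ.p (n + 5) = τ.p (n + 1)) ∧
      τ.mu n + τ.mu (n + 1) + τ.mu (n + 2) + τ.mu (n + 3) = 9 ∧
      τ.q (n + 1) ≠ τ.q n ∧ τ.q (n + 2) ≠ τ.q n ∧ τ.q (n + 3) ≠ τ.q n := by
  obtain ⟨j, k, d, N1, lt0, xi1, qi1, qj1, mu0⟩ := H.step h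
  obtain ⟨P2, xi2, xj2, qi2, qj2, mu1⟩ := N1.step h d
  have sx0 := h.symm.sum_coord d (τ.p n)
  have sx1 := h.symm.sum_coord d (τ.p (n + 1))
  have sq0 := h.sum_coord d (τ.q n)
  have x0 := H.coord_p
  have q0 := H.coord_q
  have x1 := N1.coord_p
  have bj := H.bound_p j d.ij.symm
  have bqj := H.bound_q j d.ij.symm
  have bqk := H.bound_q k d.ik.symm
  obtain ⟨j', k', d', N3, lt2, xk3, qk3, qj3, mu2⟩ := P2.step h
  obtain ⟨rfl, rfl⟩ : j' = j ∧ k' = i := by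
    rcases d.rotate.rotate.swap.eq_or_swap d' with e | ⟨rfl, rfl⟩
    · exact e
    · linarith
  obtain ⟨P4, xk4, xj4, qk4, qj4, mu3⟩ := N3.step h d'
  have sx3 := h.symm.sum_coord d (τ.p (n + 3))
  have sx4 := h.symm.sum_coord d (τ.p (n + 4))
  have sq4 := h.sum_coord d (τ.q (n + 4))
  have x3 := N3.coord_p
  have x4 := P4.coord_p
  have q4 := P4.coord_q
  have q3 := N3.coord_q
  have hp : τ.p (n + 4) = τ.p n :=
    h.symm.ext (d.forall_iff.2 ⟨by linarith, by linarith, by linarith⟩)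
  have hq : τ.q (n + 4) = τ.q n :=
    h.ext (d.forall_iff.2 ⟨by linarith, by linarith, by linarith⟩)
  have ne : ∀ {m}, ⟪W k', τ.q m⟫ ≠ 1 → τ.q m ≠ τ.q n := fun h1 h2 => h1 (by rw [h2, q0])
  obtain ⟨j₅, k₅, d₅, N5, lt4, xi5, qi5, qj5, -⟩ := P4.step h
  rw [hp] at lt4 xi5
  rw [hq] at qi5 qj5
  obtain ⟨rfl, rfl⟩ : j₅ = j' ∧ k₅ = k := by
    rcases d.eq_or_swap d₅ with e | ⟨rfl, rfl⟩
    · exact e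
    · linarith
  have x5 := N5.coord_p
  have sx5 := h.symm.sum_coord d (τ.p (n + 5))
  have q1 := N1.coord_q
  have q5 := N5.coord_q
  refine ⟨⟨hq, hp⟩, ⟨h.ext (d.forall_iff.2 ⟨?_, ?_, ?_⟩), h.symm.ext (d.forall_iff.2 ⟨?_, ?_, ?_⟩)⟩,
    ?_, ne ?_, ne ?_, ne ?_⟩ <;> linarith

lemma sSup_eq_mu (h : DualTriples V W)
    (τ : ClassicalTraj (hexagon V) (polarBody (triangle V))) (n : ℕ) :
    sSup ((fun p => ⟪p, τ.q (n + 1) - τ.q n⟫) '' polarBody (triangle V)) = τ.mu n := by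
  obtain ⟨e, he, he1, -⟩ := h.normal_polar (τ.p_mem (n + 1)) (τ.np_spec (n + 1))
  have hmu := τ.mu_pos n
  refine IsGreatest.csSup_eq ⟨⟨τ.p (n + 1),
    DualTriples.isClosed_polar.frontier_subset (τ.p_mem (n + 1)), ?_⟩, ?_⟩
  · simp only [τ.motion, he, real_inner_smul_right]
    rw [real_inner_comm, he1, mul_one]
  · rintro _ ⟨p, hp, rfl⟩
    simp only [τ.motion, he, real_inner_smul_right]
    rw [real_inner_comm]
    nlinarith [DualTriples.mem_polar_hull.1 hp e]

lemma four_periodic (h : DualTriples V W)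
    (τ : ClassicalTraj (hexagon V) (polarBody (triangle V))) (n : ℕ) :
    τ.q (n + 4) = τ.q n ∧ τ.p (n + 4) = τ.p n := by
  obtain ⟨m, hm⟩ : ∃ m, τ.m = m + 1 := ⟨τ.m - 1, by have := τ.m_pos; omega⟩
  have hq : ∀ l, τ.q (l + (m + 1)) = τ.q l := fun l => hm ▸ τ.q_periodic l
  have hp : ∀ l, τ.p (l + (m + 1)) = τ.p l := fun l => hm ▸ τ.p_periodic l
  have hshift := And.intro (hq (n + 4)) (hp (n + 4))
  have hn := And.intro (hq n) (hp n)
  rw [show n + 4 + (m + 1) = (n + m) + 5 by ring] at hshift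
  rw [show n + (m + 1) = (n + m) + 1 by ring] at hn
  rw [← hshift.1, ← hshift.2, ← hn.1, ← hn.2]
  rcases τ.posBounce_or_negBounce h (n + m) with ⟨i, P⟩ | ⟨j, k, hjk, N⟩
  · exact (P.cycle h).2.1
  · obtain ⟨i, d⟩ := Distinct.exists_of_ne hjk
    exact ((N.step h d.rotate.rotate).1.cycle h).1

/-- Every simple trajectory has four bounces and length `9`. -/
lemma IsSimple.period_and_length (h : DualTriples V W) (hτ : τ.IsSimple) :
    τ.m = 4 ∧ τ.length = 9 := by
  have hpos := τ.m_pos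
  obtain ⟨n, hn, i, P⟩ : ∃ n, n < 2 ∧ ∃ i, PosBounce W τ n i := by
    rcases τ.posBounce_or_negBounce h 0 with ⟨i, P⟩ | ⟨j, k, hjk, N⟩
    · exact ⟨0, by norm_num, i, P⟩
    · obtain ⟨i, d⟩ := Distinct.exists_of_ne hjk
      exact ⟨1, by norm_num, k, (N.step h d.rotate.rotate).1⟩
  obtain ⟨-, -, hsum, ne1, ne2, ne3⟩ := P.cycle h
  have hm : τ.m = 4 := by
    by_contra hne
    have hper := τ.q_periodic n
    have hlt : τ.m < 4 := by
      by_contra hge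
      exact hτ 4 (by norm_num) (by omega) (τ.four_periodic h)
    interval_cases hm : τ.m
    exacts [ne1 hper, ne2 hper, ne3 hper]
  refine ⟨hm, ?_⟩
  have mu_four : τ.mu 4 = τ.mu 0 := by
    rw [← sSup_eq_mu h, ← sSup_eq_mu h, (τ.four_periodic h 0).1, (τ.four_periodic h 1).1]
  simp only [length, hm, sSup_eq_mu h, Finset.sum_range_succ, Finset.sum_range_zero]
  interval_cases n <;> norm_num at hsum <;> linarith

end ClassicalTraj

/-- The `4`-periodic sequence with the given first four values. -/
def fourCycle {X : Type*} (a b c d : X) (n : ℕ) : X :=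
  if n % 4 = 0 then a else if n % 4 = 1 then b else if n % 4 = 2 then c else d

section fourCycle

variable {X : Type*} (a b c d : X) (n : ℕ)

lemma fourCycle_succ : fourCycle a b c d (n + 1) = fourCycle b c d a n := by
  have : n % 4 = 0 ∨ n % 4 = 1 ∨ n % 4 = 2 ∨ n % 4 = 3 := by omega
  rcases this with h | h | h | h <;> simp [fourCycle, Nat.add_mod, h]

lemma fourCycle_add_four : fourCycle a b c d (n + 4) = fourCycle a b c d n := by simp [fourCycle]

end fourCycle

/-- The point whose coordinates along `i` and `j` are `a` and `b`. -/
noncomputable def point (V : Fin 3 → E2) (i j k : Fin 3) (a b : ℝ) : E2 :=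
  a • V i + b • V j + (-a - b) • V k

namespace DualTriples

variable {V W : Fin 3 → E2} {i j k : Fin 3} {p q : E2}

lemma inner_point (h : DualTriples V W) (d : Distinct i j k) (a b : ℝ) :
    ⟪W i, point V i j k a b⟫ = a ∧ ⟪W j, point V i j k a b⟫ = b ∧
      ⟪W k, point V i j k a b⟫ = -a - b :=
  h.coord_point d (by ring)

lemma ext_of_two (h : DualTriples V W) (d : Distinct i j k) (hi : ⟪W i, p⟫ = ⟪W i, q⟫)
    (hj : ⟪W j, p⟫ = ⟪W j, q⟫) : p = q := by
  refine h.ext (d.forall_iff.2 ⟨hi, hj, ?_⟩)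
  linarith [h.sum_coord d p, h.sum_coord d q]

lemma point_sub_point (h : DualTriples V W) (d : Distinct i j k) {a b a' b' t : ℝ} {l : Fin 3}
    (hi : a' - a = t * ⟪W i, V l⟫) (hj : b' - b = t * ⟪W j, V l⟫) :
    point V i j k a' b' - point V i j k a b = t • V l := by
  obtain ⟨h1, h2, -⟩ := h.inner_point d a b
  obtain ⟨h1', h2', -⟩ := h.inner_point d a' b'
  refine h.ext_of_two d ?_ ?_
  · rw [inner_sub_right, h1, h1', hi, real_inner_smul_right]
  · rw [inner_sub_right, h2, h2', hj, real_inner_smul_right]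

/-- The two-parameter family of closed billiard trajectories. -/
lemma exists_orbit (h : DualTriples V W) (d : Distinct i j k) {b y : ℝ} (hb0 : 0 < b) (hb1 : b < 1)
    (hy0 : -1 / 2 < y) (hy1 : y < 1) :
    ∃ τ : ClassicalTraj (hexagon V) (polarBody (triangle V)), τ.IsSimple ∧ τ.m = 4 ∧
      τ.q = fourCycle (point V i j k 1 (-b)) (point V i j k (1 - b) b)
        (point V i j k (-b) (b - 1)) (point V i j k (-1) (1 - b)) ∧
      τ.p = fourCycle (point W i j k 1 y) (point W i j k (2 * y - 1) 1)
        (point W i j k (y - 3 / 2) (1 / 2 - y)) (point W i j k (2 * y - 1) 1) := by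
  obtain ⟨a0, b0, c0⟩ := h.inner_point d 1 (-b)
  obtain ⟨a1, b1, c1⟩ := h.inner_point d (1 - b) b
  obtain ⟨a2, b2, c2⟩ := h.inner_point d (-b) (b - 1)
  obtain ⟨a3, b3, c3⟩ := h.inner_point d (-1) (1 - b)
  obtain ⟨x0, y0, z0⟩ := h.symm.inner_point d 1 y
  obtain ⟨x1, y1, z1⟩ := h.symm.inner_point d (2 * y - 1) 1
  obtain ⟨x2, y2, z2⟩ := h.symm.inner_point d (y - 3 / 2) (1 / 2 - y)
  have Q0 := h.edge_hexagon_pos d a0 (by linarith) (by linarith)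
  have Q1 := h.edge_hexagon_neg (q := point V i j k (1 - b) b) d.rotate.rotate (by linarith)
    (by linarith) (by linarith)
  have Q2 := h.edge_hexagon_pos (q := point V i j k (-b) (b - 1)) d.rotate.rotate (by linarith)
    (by linarith) (by linarith)
  have Q3 := h.edge_hexagon_neg d a3 (by linarith) (by linarith)
  have P0 := h.edge_polar d x0 (by linarith) (by linarith)
  have P1 := h.edge_polar d.rotate y1 (by linarith) (by linarith)
  have P2 := h.edge_polar (p := point W i j k (y - 3 / 2) (1 / 2 - y)) d.rotate.rotate
    (by linarith) (by linarith) (by linarith)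
  obtain ⟨⟨t1, t2, -⟩, ⟨t4, t5⟩, ⟨t6, -⟩, t8, -⟩ := h.inner_table d
  obtain ⟨⟨t1', -, -⟩, ⟨-, t5'⟩, ⟨t6', -⟩, t8', -⟩ := h.symm.inner_table d
  refine ⟨{
    m := 4
    m_pos := by norm_num
    q := fourCycle (point V i j k 1 (-b)) (point V i j k (1 - b) b)
        (point V i j k (-b) (b - 1)) (point V i j k (-1) (1 - b))
    p := fourCycle (point W i j k 1 y) (point W i j k (2 * y - 1) 1)
        (point W i j k (y - 3 / 2) (1 / 2 - y)) (point W i j k (2 * y - 1) 1)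
    nq := fourCycle (W i) (-W k) (W k) (-W i)
    np := fourCycle (V i) (V j) (V k) (V j)
    lam := fourCycle (3 * (1 - y)) (3 * (1 / 2 + y)) (3 * (1 / 2 + y)) (3 * (1 - y))
    mu := fourCycle (3 * b) 3 (3 * (1 - b)) 3
    q_periodic := fun n => fourCycle_add_four ..
    p_periodic := fun n => fourCycle_add_four ..
    q_mem := ?_
    p_mem := ?_
    nq_spec := ?_
    np_spec := ?_
    lam_pos := ?_
    mu_pos := ?_
    reflection := ?_
    motion := ?_ }, ?_, rfl, rfl, rfl⟩
  case refine_9 =>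
    have hx : ∀ a b, a ≠ 1 → point W i j k a b ≠ point W i j k 1 y := fun a b ha heq => by
      have := (h.symm.inner_point d a b).1
      rw [heq, x0] at this
      exact ha this.symm
    intro n hn hn4 hper
    have hn4 : n < 4 := hn4
    have h0 := (hper 0).2
    interval_cases n
    · exact hx _ _ (by linarith) h0
    · exact hx _ _ (by linarith) h0
    · exact hx _ _ (by linarith) h0
  all_goals
    intro n
    try simp only [fourCycle_succ]
    unfold fourCycle
  case refine_1 => split_ifs; exacts [Q0.1, Q1.1, Q2.1, Q3.1]
  case refine_2 => split_ifs; exacts [P0.1, P1.1, P2.1, P1.1]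
  case refine_3 => split_ifs; exacts [Q0.2, Q1.2, Q2.2, Q3.2]
  case refine_4 => split_ifs; exacts [P0.2, P1.2, P2.2, P1.2]
  case refine_5 => split_ifs <;> linarith
  case refine_6 => split_ifs <;> linarith
  case refine_7 =>
    split_ifs <;> (try rw [neg_smul_neg]) <;> refine h.symm.point_sub_point d ?_ ?_ <;>
    simp only [t1', t5', t6', t8'] <;> ring
  case refine_8 =>
    split_ifs <;> refine h.point_sub_point d ?_ ?_ <;>
    simp only [t1, t2, t4, t5, t6, t8] <;> ring

lemma mem_segment_point (h : DualTriples V W) (d : Distinct i j k) {a b a' b' t : ℝ}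
    (ht0 : 0 ≤ t) (ht1 : t ≤ 1) (hi : ⟪W i, q⟫ = a + t * (a' - a))
    (hj : ⟪W j, q⟫ = b + t * (b' - b)) :
    q ∈ segment ℝ (point V i j k a b) (point V i j k a' b') := by
  rw [segment_eq_image']
  refine ⟨t, ⟨ht0, ht1⟩, h.ext_of_two d ?_ ?_⟩
  · simp only [inner_add_right, inner_sub_right, real_inner_smul_right, (h.inner_point d _ _).1, hi]
  · simp only [inner_add_right, inner_sub_right, real_inner_smul_right, (h.inner_point d _ _).2.1, hj]

lemma eq_point (h : DualTriples V W) (d : Distinct i j k) {a b : ℝ} (hi : ⟪W i, q⟫ = a)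
    (hj : ⟪W j, q⟫ = b) : q = point V i j k a b :=
  h.ext_of_two d (hi.trans (h.inner_point d a b).1.symm) (hj.trans (h.inner_point d a b).2.1.symm)

end DualTriples

/-- The union of the traces of all simple closed trajectories of length `9`. -/
def sweptSet (V : Fin 3 → E2) : Set (E2 × E2) :=
  {w | ∃ τ : ClassicalTraj (hexagon V) (polarBody (triangle V)),
    τ.IsSimple ∧ τ.length = 9 ∧ w ∈ τ.trace}

lemma ClassicalTraj.mem_trace_of_mem_segment_q {H T : Set E2} (τ : ClassicalTraj H T) {n : ℕ}
    (hn : n < τ.m) {q p : E2} (hp : p = τ.p (n + 1)) (hq : q ∈ segment ℝ (τ.q n) (τ.q (n + 1))) :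
    (q, p) ∈ τ.trace :=
  Set.mem_biUnion (Finset.mem_range.2 hn) (.inl ⟨q, hq, by rw [hp]⟩)

lemma ClassicalTraj.mem_trace_of_mem_segment_p {H T : Set E2} (τ : ClassicalTraj H T) {n : ℕ}
    (hn : n < τ.m) {q p : E2} (hq : q = τ.q n) (hp : p ∈ segment ℝ (τ.p n) (τ.p (n + 1))) :
    (q, p) ∈ τ.trace :=
  Set.mem_biUnion (Finset.mem_range.2 hn) (.inr ⟨p, hp, by rw [hq]⟩)

namespace DualTriples

variable {V W : Fin 3 → E2} {i j k : Fin 3} {p q : E2}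

lemma swept_of_q_pos_edge (h : DualTriples V W) (d : Distinct i j k) (hi : ⟪W i, q⟫ = 1)
    (hj : -1 < ⟪W j, q⟫) (hk : -1 < ⟪W k, q⟫) (xi : ⟪V i, p⟫ < 1) (xj : ⟪V j, p⟫ < 1)
    (xk : ⟪V k, p⟫ < ⟪V j, p⟫) : (q, p) ∈ sweptSet V := by
  have sq := h.sum_coord d q
  have sp := h.symm.sum_coord d p
  set y := ⟪V j, p⟫ - (1 - ⟪V i, p⟫) / 2 with hy
  obtain ⟨τ, hτ, hm, hτq, hτp⟩ := h.exists_orbit d (b := -⟪W j, q⟫) (y := y)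
    (by linarith) (by linarith) (by linarith) (by linarith)
  have hy1 : 0 < 1 - y := by linarith
  refine ⟨τ, hτ, (hτ.period_and_length h).2, τ.mem_trace_of_mem_segment_p (n := 0)
    (by rw [hm]; norm_num) ?_ ?_⟩
  · rw [hτq]
    exact h.eq_point d hi (by ring)
  · rw [hτp]
    refine h.symm.mem_segment_point d (t := (1 - ⟪V i, p⟫) / 2 / (1 - y))
      (div_nonneg (by linarith) hy1.le) ((div_le_one hy1).2 (by linarith)) ?_ ?_ <;>
    field_simp <;> rw [hy] <;> ring

lemma swept_of_q_neg_edge (h : DualTriples V W) (d : Distinct i j k) (hi : ⟪W i, q⟫ = -1)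
    (hj : ⟪W j, q⟫ < 1) (hk : ⟪W k, q⟫ < 1) (xi : ⟪V i, p⟫ < 1) (xj : ⟪V j, p⟫ < 1)
    (xk : ⟪V k, p⟫ < ⟪V j, p⟫) : (q, p) ∈ sweptSet V := by
  have sq := h.sum_coord d q
  have sp := h.symm.sum_coord d p
  set y := ⟪V j, p⟫ - (1 - ⟪V i, p⟫) / 2 with hy
  obtain ⟨τ, hτ, hm, hτq, hτp⟩ := h.exists_orbit d (b := 1 - ⟪W j, q⟫) (y := y)
    (by linarith) (by linarith) (by linarith) (by linarith)
  have hy1 : 0 < 1 - y := by linarith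
  refine ⟨τ, hτ, (hτ.period_and_length h).2, τ.mem_trace_of_mem_segment_p (n := 3)
    (by rw [hm]; norm_num) ?_ ?_⟩
  · rw [hτq]
    exact h.eq_point d hi (by ring)
  · rw [hτp, segment_symm]
    refine h.symm.mem_segment_point d (t := (1 - ⟪V i, p⟫) / 2 / (1 - y))
      (div_nonneg (by linarith) hy1.le) ((div_le_one hy1).2 (by linarith)) ?_ ?_ <;>
    field_simp <;> rw [hy] <;> ring

lemma swept_of_central (h : DualTriples V W) (d : Distinct i j k) (xi : ⟪V i, p⟫ = 1)
    (xj : ⟪V j, p⟫ < 1) (xk : ⟪V k, p⟫ < ⟪V j, p⟫) (hi0 : -1 < ⟪W i, q⟫) (hi1 : ⟪W i, q⟫ < 1)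
    (hjk : ⟪W j, q⟫ - ⟪W k, q⟫ < 1) (hkj : ⟪W k, q⟫ - ⟪W j, q⟫ < 1) : (q, p) ∈ sweptSet V := by
  have sq := h.sum_coord d q
  have sp := h.symm.sum_coord d p
  obtain ⟨τ, hτ, hm, hτq, hτp⟩ := h.exists_orbit d (b := (1 - ⟪W j, q⟫ + ⟪W k, q⟫) / 2)
    (y := ⟪V j, p⟫) (by linarith) (by linarith) (by linarith) (by linarith)
  refine ⟨τ, hτ, (hτ.period_and_length h).2, τ.mem_trace_of_mem_segment_q (n := 3)
    (by rw [hm]; norm_num) ?_ ?_⟩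
  · rw [hτp]
    exact h.symm.eq_point d xi rfl
  · rw [hτq]
    exact h.mem_segment_point d (t := (1 + ⟪W i, q⟫) / 2) (by linarith) (by linarith)
      (by linarith) (by linarith)

lemma swept_of_corner (h : DualTriples V W) (d : Distinct i j k) (xj : ⟪V j, p⟫ = 1)
    (xi : ⟪V i, p⟫ < 1) (xk : ⟪V k, p⟫ < 1) (hi : ⟪W i, q⟫ < 1) (hk : -1 < ⟪W k, q⟫)
    (hik : 1 < ⟪W i, q⟫ - ⟪W k, q⟫) : (q, p) ∈ sweptSet V := by
  have sq := h.sum_coord d q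
  have sp := h.symm.sum_coord d p
  have hb : 0 < 2 - ⟪W i, q⟫ + ⟪W k, q⟫ := by linarith
  obtain ⟨τ, hτ, hm, hτq, hτp⟩ := h.exists_orbit d (b := 2 - ⟪W i, q⟫ + ⟪W k, q⟫)
    (y := (1 + ⟪V i, p⟫) / 2) hb (by linarith) (by linarith) (by linarith)
  refine ⟨τ, hτ, (hτ.period_and_length h).2, τ.mem_trace_of_mem_segment_q (n := 0)
    (by rw [hm]; norm_num) ?_ ?_⟩
  · rw [hτp]
    exact h.symm.eq_point d (by ring) xj
  · rw [hτq]
    refine h.mem_segment_point d (t := (1 - ⟪W i, q⟫) / (2 - ⟪W i, q⟫ + ⟪W k, q⟫))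
      (div_nonneg (by linarith) hb.le) ((div_le_one hb).2 (by linarith)) ?_ ?_
    · field_simp
      ring
    · field_simp
      linear_combination sq

end DualTriples

/-- If the open segment from `z` to `z₀` lies in `S`, then `z` is arbitrarily close to `S`. -/
lemma exists_dist_lt_of_segment {S : Set (E2 × E2)} {z z₀ : E2 × E2}
    (hS : ∀ t : ℝ, 0 < t → t < 1 →
      ((1 - t) • z.1 + t • z₀.1, (1 - t) • z.2 + t • z₀.2) ∈ S) {ε : ℝ} (hε : 0 < ε) :
    ∃ w ∈ S, dist z w < ε := by
  have htend : Filter.Tendsto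
      (fun t : ℝ => ((1 - t) • z.1 + t • z₀.1, (1 - t) • z.2 + t • z₀.2))
      (nhdsWithin 0 (Set.Ioi 0)) (nhds z) := by
    have : Continuous fun t : ℝ => ((1 - t) • z.1 + t • z₀.1, (1 - t) • z.2 + t • z₀.2) := by
      fun_prop
    simpa using (this.tendsto 0).mono_left nhdsWithin_le_nhds
  obtain ⟨t, ht, ht0, ht1⟩ := ((htend.eventually (Metric.ball_mem_nhds z hε)).and
    (Ioo_mem_nhdsGT one_pos)).exists
  exact ⟨_, hS t ht0 ht1, by rwa [dist_comm]⟩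

namespace DualTriples

variable {V W : Fin 3 → E2} {i j k : Fin 3}

lemma exists_index_of_polar (p : E2) (i : Fin 3) :
    ∃ j k, Distinct i j k ∧ ⟪V k, p⟫ ≤ ⟪V j, p⟫ := by
  obtain ⟨j, k, d⟩ := Distinct.exists_of_index i
  rcases le_total ⟪V k, p⟫ ⟪V j, p⟫ with hle | hle
  exacts [⟨j, k, d, hle⟩, ⟨k, j, d.swap, hle⟩]

/-- The traces of the simple closed trajectories are dense in the boundary of phase space. -/
lemma exists_swept_near (h : DualTriples V W) {z : E2 × E2}
    (hz : z ∈ frontier (hexagon V ×ˢ polarBody (triangle V))) {ε : ℝ} (hε : 0 < ε) :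
    ∃ w ∈ sweptSet V, dist z w < ε := by
  rw [frontier_prod_eq, h.isClosed_hexagon.closure_eq, isClosed_polar.closure_eq] at hz
  obtain ⟨hq, hp⟩ : z.1 ∈ hexagon V ∧ z.2 ∈ polarBody (triangle V) := by
    rcases hz with hz | hz
    · exact ⟨hz.1, isClosed_polar.frontier_subset hz.2⟩
    · exact ⟨h.isClosed_hexagon.frontier_subset hz.1, hz.2⟩
  rw [h.mem_hexagon] at hq
  rw [mem_polar_hull] at hp
  -- moving from `z` towards `z₀` makes the strict inequalities of `z₀` hold
  have move : ∀ {a b t : ℝ}, 0 < t → t < 1 → 0 ≤ a → 0 < b → 0 < (1 - t) * a + t * b :=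
    fun ht0 ht1 ha hb => add_pos_of_nonneg_of_pos
      (mul_nonneg (by linarith) ha) (mul_pos ht0 hb)
  rcases hz with ⟨-, hz⟩ | ⟨hz, -⟩
  · obtain ⟨i, hi⟩ := exists_of_mem_frontier_polar hz
    obtain ⟨j, k, d, hjk⟩ := exists_index_of_polar (V := V) z.2 i
    have corner : ∀ {j k}, Distinct i j k → 1 ≤ ⟪W j, z.1⟫ - ⟪W k, z.1⟫ →
        ∃ w ∈ sweptSet V, dist z w < ε := by
      intro j k d hjk
      obtain ⟨-, b, c⟩ := h.inner_point d 0 (3 / 4)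
      obtain ⟨x, y, w⟩ := h.symm.inner_point d 1 (-1 / 2)
      refine exists_dist_lt_of_segment
        (z₀ := (point V i j k 0 (3 / 4), point W i j k 1 (-1 / 2))) (fun t ht0 ht1 => ?_) hε
      refine h.swept_of_corner (i := j) (j := i) (k := k) d.rotate.swap ?_ ?_ ?_ ?_ ?_ ?_ <;>
      simp only [inner_add_right, real_inner_smul_right, b, c, x, y, w, hi]
      · ring
      · linarith [move (b := 3 / 2) ht0 ht1 (sub_nonneg.2 (hp j)) (by norm_num)]
      · linarith [move (b := 3 / 2) ht0 ht1 (sub_nonneg.2 (hp k)) (by norm_num)]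
      · linarith [move (b := 1 / 4) ht0 ht1 (sub_nonneg.2 (hq j).2) (by norm_num)]
      · linarith [move (b := 1 / 4) ht0 ht1 (sub_nonneg.2 (hq k).1) (by norm_num)]
      · linarith [move (b := 1 / 2) ht0 ht1 (sub_nonneg.2 hjk) (by norm_num)]
    rcases le_total 1 (⟪W j, z.1⟫ - ⟪W k, z.1⟫) with h1 | h1
    · exact corner d h1
    rcases le_total 1 (⟪W k, z.1⟫ - ⟪W j, z.1⟫) with h2 | h2
    · exact corner d.swap h2
    obtain ⟨x, y, w⟩ := h.symm.inner_point d 1 (1 / 2)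
    refine exists_dist_lt_of_segment (z₀ := (0, point W i j k 1 (1 / 2)))
      (fun t ht0 ht1 => ?_) hε
    refine h.swept_of_central d ?_ ?_ ?_ ?_ ?_ ?_ ?_ <;>
    simp only [inner_add_right, real_inner_smul_right, inner_zero_right, x, y, w, hi]
    · ring
    · linarith [move (b := 1 / 2) ht0 ht1 (sub_nonneg.2 (hp j)) (by norm_num)]
    · linarith [move (b := 2) ht0 ht1 (sub_nonneg.2 hjk) (by norm_num)]
    · linarith [move (b := 1) ht0 ht1 (sub_nonneg.2 (hq i).1) (by norm_num)]
    · linarith [move (b := 1) ht0 ht1 (sub_nonneg.2 (hq i).2) (by norm_num)]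
    · linarith [move (b := 1) ht0 ht1 (sub_nonneg.2 h1) (by norm_num)]
    · linarith [move (b := 1) ht0 ht1 (sub_nonneg.2 h2) (by norm_num)]
  · obtain ⟨i, hi⟩ := h.exists_of_mem_frontier_hexagon hz
    obtain ⟨j, k, d, hjk⟩ := exists_index_of_polar (V := V) z.2 i
    obtain ⟨x, y, w⟩ := h.symm.inner_point d 0 (1 / 2)
    rcases hi with hi | hi
    · obtain ⟨a, b, c⟩ := h.inner_point d 1 (-1 / 2)
      refine exists_dist_lt_of_segment
        (z₀ := (point V i j k 1 (-1 / 2), point W i j k 0 (1 / 2))) (fun t ht0 ht1 => ?_) hε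
      refine h.swept_of_q_pos_edge d ?_ ?_ ?_ ?_ ?_ ?_ <;>
      simp only [inner_add_right, real_inner_smul_right, a, b, c, x, y, w, hi]
      · ring
      · linarith [move (b := 1 / 2) ht0 ht1 (sub_nonneg.2 (hq j).1) (by norm_num)]
      · linarith [move (b := 1 / 2) ht0 ht1 (sub_nonneg.2 (hq k).1) (by norm_num)]
      · linarith [move (b := 1) ht0 ht1 (sub_nonneg.2 (hp i)) (by norm_num)]
      · linarith [move (b := 1 / 2) ht0 ht1 (sub_nonneg.2 (hp j)) (by norm_num)]
      · linarith [move (b := 1) ht0 ht1 (sub_nonneg.2 hjk) (by norm_num)]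
    · obtain ⟨a, b, c⟩ := h.inner_point d (-1) (1 / 2)
      refine exists_dist_lt_of_segment
        (z₀ := (point V i j k (-1) (1 / 2), point W i j k 0 (1 / 2))) (fun t ht0 ht1 => ?_) hε
      refine h.swept_of_q_neg_edge d ?_ ?_ ?_ ?_ ?_ ?_ <;>
      simp only [inner_add_right, real_inner_smul_right, a, b, c, x, y, w, hi]
      · ring
      · linarith [move (b := 1 / 2) ht0 ht1 (sub_nonneg.2 (hq j).2) (by norm_num)]
      · linarith [move (b := 1 / 2) ht0 ht1 (sub_nonneg.2 (hq k).2) (by norm_num)]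
      · linarith [move (b := 1) ht0 ht1 (sub_nonneg.2 (hp i)) (by norm_num)]
      · linarith [move (b := 1 / 2) ht0 ht1 (sub_nonneg.2 (hp j)) (by norm_num)]
      · linarith [move (b := 1) ht0 ht1 (sub_nonneg.2 hjk) (by norm_num)]

end DualTriples

end Billiard2

open Billiard2 in
/-- For an equilateral triangle `K` centered at the origin, every simple classical closed
billiard trajectory in the hexagon `K − K` with geometry given by `K°` is 4-periodic and
has length 9; moreover, arbitrarily close to any point of `∂((K−K) × K°)` there passes
such a shortest billiard trajectory. -/
theorem hexagon_trajectories (A B C : E2)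
    (hpos : 0 < dist A B) (h1 : dist A B = dist B C) (h2 : dist B C = dist C A)
    (hcent : A + B + C = 0)
    (K : Set E2) (hK : K = convexHull ℝ {A, B, C}) :
    (∀ τ : ClassicalTraj (K - K) (polarBody K), τ.IsSimple →
      τ.m = 4 ∧ τ.length = 9) ∧
    (∀ z ∈ frontier ((K - K) ×ˢ polarBody K), ∀ ε : ℝ, 0 < ε →
      ∃ τ : ClassicalTraj (K - K) (polarBody K), τ.IsSimple ∧ τ.length = 9 ∧
        ∃ w ∈ τ.trace, dist z w < ε) := by
  obtain ⟨W, h⟩ := exists_dualTriples hpos h1 h2 hcent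
  obtain rfl : K = triangle ![A, B, C] := by
    rw [hK, triangle]
    congr 1
    ext x
    simp only [Set.mem_insert_iff, Set.mem_singleton_iff, Set.mem_range, Fin.exists_fin_succ,
      eq_comm (a := x)]
    simp
  refine ⟨fun τ hτ => hτ.period_and_length h, fun z hz ε hε => ?_⟩
  obtain ⟨w, ⟨τ, hτ, hlen, hw⟩, hdist⟩ := h.exists_swept_near hz hε
  exact ⟨τ, hτ, hlen, w, hw, hdist⟩
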